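/- arXiv:1104.4051 — 4 statements merged into one kernel-verified Lean document; each statement's English description precedes it below -/
import Mathlib

section
/- For every integer n ≥ 3, the set of values of the permanent on Λ̂_n^3 equals the set of all products a(n_1)·a(n_2)⋯a(n_m), where {n_1,…,n_m} ranges over all partitions of n with parts ≥ 3. That is, {per A : A ∈ Λ̂_n^3} = { ∏_{i=1}^m a(n_i) : n_1+⋯+n_m = n, each n_i ≥ 3 }. -/
open Matrix

/-- `Λ̂_n^3`: symmetric (0,1)-matrices with exactly three 1's in every row and
every column, and with 1's on the main diagonal. -/
def LambdaHat3 (n : ℕ) : Set (Matrix (Fin n) (Fin n) ℤ) :=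
  {A | (∀ i j, A i j = 0 ∨ A i j = 1) ∧ (∀ i, ∑ j, A i j = 3) ∧ (∀ j, ∑ i, A i j = 3) ∧
    A.IsSymm ∧ (∀ i, A i i = 1)}

namespace Matrix

section Permanent

variable {R : Type*} [CommSemiring R]

/-- Laplace expansion of the permanent along the first column. -/
theorem permanent_succ_column_zero {n : ℕ} (A : Matrix (Fin (n + 1)) (Fin (n + 1)) R) :
    A.permanent = ∑ i, A i 0 * (A.submatrix i.succAbove Fin.succ).permanent := by
  rw [permanent, Finset.univ_perm_fin_succ, ← Finset.univ_product_univ]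
  simp only [Finset.sum_map, Equiv.toEmbedding_apply, Finset.sum_product]
  refine Finset.sum_congr rfl fun i _ => ?_
  refine Fin.cases ?_ (fun i => ?_) i
  · simp [Fin.prod_univ_succ, permanent, Finset.mul_sum]
  · rw [← permanent_permute_cols i.cycleRange, permanent, Finset.mul_sum]
    simp [Fin.prod_univ_succ, Fin.succAbove_cycleRange]

theorem permanent_submatrix_equiv_self {m n : Type*} [Fintype m] [DecidableEq m] [Fintype n]
    [DecidableEq n] (e : m ≃ n) (A : Matrix n n R) :
    (A.submatrix e e).permanent = A.permanent := by
  refine Fintype.sum_equiv e.permCongr _ _ fun σ => ?_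
  exact Fintype.prod_equiv e _ _ fun i => by simp

theorem permanent_fromBlocks_zero {m n : Type*} [Fintype m] [DecidableEq m] [Fintype n]
    [DecidableEq n] (A : Matrix m m R) (D : Matrix n n R) :
    (fromBlocks A 0 0 D).permanent = A.permanent * D.permanent := by
  classical
  simp only [permanent]
  rw [Finset.sum_mul_sum, ← Finset.sum_product', Finset.univ_product_univ]
  symm
  refine Finset.sum_of_injOn (fun σ => Equiv.Perm.sumCongr σ.1 σ.2) ?_ (by simp) ?_ ?_
  · exact Equiv.Perm.sumCongrHom_injective.injOn
  · intro σ _ hσ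
    have h : ¬ ∀ x, ∃ y, Sum.inl y = σ (Sum.inl x) := by
      intro h
      refine hσ ?_
      obtain ⟨τ, hτ⟩ := Equiv.Perm.mem_sumCongrHom_range_of_perm_mapsTo_inl (σ := σ)
        (by rintro _ ⟨x, rfl⟩; exact h x)
      exact ⟨τ, by simp, hτ⟩
    obtain ⟨a, ha⟩ := not_forall.mp h
    refine Finset.prod_eq_zero (Finset.mem_univ (Sum.inl a)) ?_
    rcases hx : σ (Sum.inl a) with b | b
    · exact absurd ⟨b, hx.symm⟩ ha
    · simp
  · intro σ _
    simp [Fintype.prod_sum_type]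

end Permanent

/-- The integer `(0,1)`-matrix of size `k` whose ones are at the positions satisfying `p`. -/
def ofPred (p : ℕ → ℕ → Prop) [DecidableRel p] (k : ℕ) : Matrix (Fin k) (Fin k) ℤ :=
  of fun i j => if p i j then 1 else 0

/-- The tridiagonal matrix all of whose entries on the three central diagonals are `1`. -/
abbrev tridiag (k : ℕ) : Matrix (Fin k) (Fin k) ℤ :=
  ofPred (fun i j => i ≤ j + 1 ∧ j ≤ i + 1) k

/-- The upper triangular matrix with ones on the diagonal and the two diagonals above it. -/
abbrev upperBand (k : ℕ) : Matrix (Fin k) (Fin k) ℤ :=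
  ofPred (fun i j => i ≤ j ∧ j ≤ i + 2) k

theorem permanent_upperBand (k : ℕ) : (upperBand k).permanent = 1 := by
  induction k with
  | zero => exact permanent_isEmpty
  | succ k ih =>
    rw [permanent_succ_column_zero, Fin.sum_univ_succ, ← ih]
    have h : (upperBand (k + 1)).submatrix (Fin.succAbove 0) Fin.succ = upperBand k := by
      ext i j
      simp [ofPred]
    rw [h]
    simp [ofPred]

theorem permanent_tridiag (k : ℕ) : (tridiag k).permanent = Nat.fib (k + 1) := by
  induction k using Nat.twoStepInduction with
  | zero => exact permanent_isEmpty
  | one => simp [ofPred]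
  | more k ih₀ ih₁ =>
    have h₀ : (tridiag (k + 2)).submatrix (Fin.succAbove 0) Fin.succ = tridiag (k + 1) := by
      ext i j
      simp [ofPred]
    have h₁ : ((tridiag (k + 2)).submatrix (Fin.succAbove (Fin.succ 0)) Fin.succ).permanent
        = (tridiag k).permanent := by
      rw [← permanent_transpose, permanent_succ_column_zero, Fin.sum_univ_succ]
      have h : ((tridiag (k + 2)).submatrix (Fin.succAbove (Fin.succ 0)) Fin.succ)ᵀ.submatrix
          (Fin.succAbove 0) Fin.succ = tridiag k := by
        ext i j
        simp [ofPred, and_comm]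
      rw [h]
      simp [ofPred]
    rw [permanent_succ_column_zero, Fin.sum_univ_succ, Fin.sum_univ_succ, h₀, h₁, ih₀, ih₁,
      Nat.fib_add_two (n := k + 1)]
    simp [ofPred]
    ring

/-- The tridiagonal matrix of size `k + 3` with two additional ones in the corners. -/
abbrev cyclicBand (k : ℕ) : Matrix (Fin (k + 3)) (Fin (k + 3)) ℤ :=
  ofPred (fun i j => (i ≤ j + 1 ∧ j ≤ i + 1) ∨ (i = 0 ∧ j = k + 2) ∨ (j = 0 ∧ i = k + 2)) (k + 3)

theorem permanent_cyclicBand (k : ℕ) :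
    (cyclicBand k).permanent = Nat.fib (k + 3) + 2 * Nat.fib (k + 2) + 2 := by
  have h₀ : (cyclicBand k).submatrix (Fin.succAbove 0) Fin.succ = tridiag (k + 2) := by
    ext i j
    simp [ofPred]
  have h₁ : ((cyclicBand k).submatrix (Fin.succAbove (Fin.succ 0)) Fin.succ).permanent
      = Nat.fib (k + 2) + 1 := by
    set B := (cyclicBand k).submatrix (Fin.succAbove (Fin.succ 0)) Fin.succ with hB
    have e₀ : Bᵀ.submatrix (Fin.succAbove 0) Fin.succ = tridiag (k + 1) := by
      ext i j
      simp [hB, ofPred, and_comm]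
    have e₁ : Bᵀ.submatrix (Fin.succAbove (Fin.last _)) Fin.succ = (upperBand (k + 1))ᵀ := by
      ext i j
      have := i.2
      have := j.2
      simp only [hB, ofPred, submatrix_apply, transpose_apply, of_apply, Fin.succAbove_last,
        Fin.succ_succAbove_succ, Fin.val_succ, Fin.val_castSucc, Fin.succAbove_zero]
      exact if_congr (by omega) rfl rfl
    rw [← permanent_transpose, permanent_succ_column_zero, Fin.sum_univ_succ,
      Fin.sum_univ_castSucc, Fin.succ_last, e₀, e₁, permanent_tridiag, permanent_transpose,
      permanent_upperBand, Finset.sum_eq_zero]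
    · simp [hB, ofPred]
    · intro i _
      have := i.2
      simp [hB, ofPred]
      omega
  have h₂ : ((cyclicBand k).submatrix (Fin.succAbove (Fin.last _)) Fin.succ).permanent
      = Nat.fib (k + 2) + 1 := by
    set B := (cyclicBand k).submatrix (Fin.succAbove (Fin.last _)) Fin.succ with hB
    have e₀ : Bᵀ.submatrix (Fin.succAbove 0) Fin.succ = upperBand (k + 1) := by
      ext i j
      have := i.2
      have := j.2
      simp only [hB, ofPred, submatrix_apply, transpose_apply, of_apply, Fin.succAbove_last,
        Fin.val_succ, Fin.val_castSucc, Fin.succAbove_zero]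
      exact if_congr (by omega) rfl rfl
    have e₁ : Bᵀ.submatrix (Fin.succAbove (Fin.last _)) Fin.succ = tridiag (k + 1) := by
      ext i j
      have := i.2
      have := j.2
      simp only [hB, ofPred, submatrix_apply, transpose_apply, of_apply, Fin.succAbove_last,
        Fin.val_succ, Fin.val_castSucc]
      exact if_congr (by omega) rfl rfl
    rw [← permanent_transpose, permanent_succ_column_zero, Fin.sum_univ_succ,
      Fin.sum_univ_castSucc, Fin.succ_last, e₀, e₁, permanent_tridiag, permanent_upperBand,
      Finset.sum_eq_zero]
    · simp [hB, ofPred]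
      ring
    · intro i _
      have := i.2
      simp [hB, ofPred]
      omega
  rw [permanent_succ_column_zero, Fin.sum_univ_succ, Fin.sum_univ_succ, Fin.sum_univ_castSucc,
    Fin.succ_last, Fin.succ_last, h₀, h₁, h₂, permanent_tridiag, Finset.sum_eq_zero]
  · simp [ofPred]
    ring
  · intro i _
    have := i.2
    simp [ofPred]
    omega

open SimpleGraph in
theorem one_add_adjMatrix_cycleGraph (k : ℕ) :
    1 + (cycleGraph (k + 3)).adjMatrix ℤ = cyclicBand k := by
  ext i j
  have h : (i = j ∨ (cycleGraph (k + 3)).Adj i j) ↔ ((i : ℕ) ≤ j + 1 ∧ (j : ℕ) ≤ i + 1) ∨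
      ((i : ℕ) = 0 ∧ (j : ℕ) = k + 2) ∨ ((j : ℕ) = 0 ∧ (i : ℕ) = k + 2) := by
    rw [cycleGraph_adj', Fin.ext_iff]
    rcases lt_trichotomy i j with hij | rfl | hij
    · rw [Fin.coe_sub_iff_lt.mpr hij, Fin.sub_val_of_le hij.le]
      omega
    · simp
    · rw [Fin.coe_sub_iff_lt.mpr hij, Fin.sub_val_of_le hij.le]
      omega
  rw [add_apply, one_apply, adjMatrix_apply]
  refine Eq.trans ?_ (if_congr h rfl rfl)
  by_cases hij : i = j <;> simp [hij]

/-- Symmetric `(0,1)`-matrices with ones on the diagonal and all row sums equal to `3`, over an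
arbitrary finite index type. -/
structure IsLambdaHat {V : Type*} [Fintype V] (A : Matrix V V ℤ) : Prop where
  zero_or_one : ∀ i j, A i j = 0 ∨ A i j = 1
  row_sum : ∀ i, ∑ j, A i j = 3
  isSymm : A.IsSymm
  diag : ∀ i, A i i = 1

theorem mem_LambdaHat3_iff {n : ℕ} {A : Matrix (Fin n) (Fin n) ℤ} :
    A ∈ LambdaHat3 n ↔ IsLambdaHat A := by
  refine ⟨fun ⟨h₁, h₂, _, h₄, h₅⟩ => ⟨h₁, h₂, h₄, h₅⟩, fun h =>
    ⟨h.zero_or_one, h.row_sum, fun j => ?_, h.isSymm, h.diag⟩⟩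
  rw [← h.row_sum j]
  exact Finset.sum_congr rfl fun i _ => h.isSymm.apply j i

namespace IsLambdaHat

variable {V W : Type*} [Fintype V] [Fintype W]

theorem submatrix {A : Matrix V V ℤ} (hA : IsLambdaHat A) (e : W ≃ V) :
    IsLambdaHat (A.submatrix e e) where
  zero_or_one _ _ := hA.zero_or_one _ _
  row_sum i := (Equiv.sum_comp e (A (e i))).trans (hA.row_sum _)
  isSymm := hA.isSymm.submatrix e
  diag _ := hA.diag _

theorem fromBlocks_iff {A : Matrix V V ℤ} {D : Matrix W W ℤ} :
    IsLambdaHat (fromBlocks A 0 0 D) ↔ IsLambdaHat A ∧ IsLambdaHat D := by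
  constructor
  · intro h
    refine ⟨⟨fun i j => h.zero_or_one (.inl i) (.inl j), fun i => ?_, ?_, fun i => h.diag (.inl i)⟩,
      ⟨fun i j => h.zero_or_one (.inr i) (.inr j), fun i => ?_, ?_, fun i => h.diag (.inr i)⟩⟩
    · simpa using h.row_sum (.inl i)
    · exact (isSymm_fromBlocks_iff.mp h.isSymm).1
    · simpa using h.row_sum (.inr i)
    · exact (isSymm_fromBlocks_iff.mp h.isSymm).2.2.2
  · rintro ⟨hA, hD⟩
    refine ⟨?_, ?_, hA.isSymm.fromBlocks (by simp) hD.isSymm, ?_⟩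
    · rintro (i | i) (j | j) <;> simp [hA.zero_or_one, hD.zero_or_one]
    · rintro (i | i) <;> simp [hA.row_sum, hD.row_sum]
    · rintro (i | i) <;> simp [hA.diag, hD.diag]

/-- The graph whose adjacency matrix is the off-diagonal part of the matrix. -/
def graph (A : Matrix V V ℤ) (hA : IsLambdaHat A) : SimpleGraph V where
  Adj i j := i ≠ j ∧ A i j = 1
  symm := ⟨fun i j h => ⟨h.1.symm, by rw [hA.isSymm.apply, h.2]⟩⟩
  loopless := ⟨fun i h => h.1 rfl⟩

theorem ncard_neighborSet {A : Matrix V V ℤ} (hA : IsLambdaHat A) (v : V) :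
    ((graph A hA).neighborSet v).ncard = 2 := by
  classical
  have h := hA.row_sum v
  rw [← Finset.add_sum_erase _ _ (Finset.mem_univ v), hA.diag,
    Finset.sum_congr rfl (g := fun j => if A v j = 1 then (1 : ℤ) else 0)
      (fun j _ => by rcases hA.zero_or_one v j with h | h <;> simp [h]), Finset.sum_boole] at h
  have e : (graph A hA).neighborSet v =
      (({j ∈ Finset.univ.erase v | A v j = 1} : Finset V) : Set V) := by
    ext j
    simp [graph, eq_comm]
  rw [e, Set.ncard_coe_finset]
  omega

open SimpleGraph in
theorem cycleGraph_isContained [Nonempty V] {A : Matrix V V ℤ} (hA : IsLambdaHat A) :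
    ∃ k, cycleGraph (k + 3) ⊑ graph A hA := by
  have v := Classical.arbitrary V
  have hc : (graph A hA).IsCycles := fun v _ => hA.ncard_neighborSet v
  obtain ⟨p, hp, -⟩ := hc.exists_cycle_toSubgraph_verts_eq_connectedComponentSupp
    (v := v) (c := (graph A hA).connectedComponentMk v) rfl
    (Set.nonempty_of_ncard_ne_zero (by simp [hA.ncard_neighborSet v]))
  have h3 := hp.three_le_length
  exact ⟨p.length - 3, (cycleGraph_isContained_iff (by omega)).mpr ⟨v, p, hp, by omega⟩⟩

theorem cyclicBand (k : ℕ) : IsLambdaHat (cyclicBand k) where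
  zero_or_one i j := by
    simp only [ofPred, of_apply]
    split_ifs <;> simp
  row_sum i := by
    rw [← one_add_adjMatrix_cycleGraph]
    have h := SimpleGraph.adjMatrix_mulVec_const_apply (α := ℤ)
      (G := SimpleGraph.cycleGraph (k + 3)) (a := 1) (v := i)
    simp only [mulVec, dotProduct, Function.const_apply, mul_one] at h
    simp [Finset.sum_add_distrib, one_apply, h, SimpleGraph.cycleGraph_degree_three_le,
      -SimpleGraph.adjMatrix_apply]
  isSymm := by
    rw [← one_add_adjMatrix_cycleGraph]
    exact isSymm_one.add (SimpleGraph.isSymm_adjMatrix _)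
  diag i := by simp [ofPred]

/-- A `Λ̂`-matrix dominating a smaller one on a subset of the indices splits as a block sum. -/
theorem eq_fromBlocks_of_le {A : Matrix (V ⊕ W) (V ⊕ W) ℤ} {C : Matrix V V ℤ} (hA : IsLambdaHat A)
    (hC : IsLambdaHat C) (h : ∀ i j, C i j ≤ A (.inl i) (.inl j)) :
    A = fromBlocks C 0 0 A.toBlocks₂₂ := by
  have nonneg : ∀ i j, 0 ≤ A i j := fun i j => by rcases hA.zero_or_one i j with h | h <;> simp [h]
  have hsum (i : V) : ∑ j, (A (.inl i) (.inl j) - C i j) + ∑ j, A (.inl i) (.inr j) = 0 := by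
    have := hA.row_sum (.inl i)
    rw [Fintype.sum_sum_type] at this
    rw [Finset.sum_sub_distrib, hC.row_sum]
    omega
  have hnn₁ (i : V) : ∀ j ∈ Finset.univ, 0 ≤ A (.inl i) (.inl j) - C i j :=
    fun j _ => sub_nonneg.mpr (h i j)
  have hnn₂ (i : V) : ∀ j ∈ Finset.univ, 0 ≤ A (.inl i) (.inr j) := fun j _ => nonneg _ _
  have h₁ (i j) : A (.inl i) (.inl j) = C i j := by
    have := Finset.single_le_sum (hnn₁ i) (Finset.mem_univ j)
    have := hsum i
    have := Finset.sum_nonneg (hnn₂ i)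
    have := h i j
    omega
  have h₂ (i j) : A (.inl i) (.inr j) = 0 := by
    have := Finset.single_le_sum (hnn₂ i) (Finset.mem_univ j)
    have := hsum i
    have := Finset.sum_nonneg (hnn₁ i)
    have := nonneg (.inl i) (.inr j)
    omega
  ext (i | i) (j | j)
  · exact h₁ i j
  · exact h₂ i j
  · exact (hA.isSymm.apply (.inl j) (.inr i)).trans (h₂ j i)
  · rfl

theorem exists_submatrix_eq_fromBlocks [Nonempty V] {A : Matrix V V ℤ} (hA : IsLambdaHat A) :
    ∃ (k : ℕ) (s : Finset V) (e : Fin (k + 3) ⊕ s ≃ V) (D : Matrix s s ℤ),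
      A.submatrix e e = fromBlocks (Matrix.cyclicBand k) 0 0 D := by
  classical
  obtain ⟨k, ⟨f⟩⟩ := hA.cycleGraph_isContained
  let e : Fin (k + 3) ⊕ (Finset.univ.filter (· ∉ Set.range f) : Finset V) ≃ V :=
    ((Equiv.ofInjective f f.injective).sumCongr
      (Equiv.subtypeEquivRight (by simp))).trans (Equiv.sumCompl (· ∈ Set.range f))
  refine ⟨k, _, e, _, (hA.submatrix e).eq_fromBlocks_of_le (cyclicBand k) fun i j => ?_⟩
  change _ ≤ A (f i) (f j)
  rw [← one_add_adjMatrix_cycleGraph]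
  by_cases hij : i = j
  · subst hij
    simp [hA.diag]
  · by_cases h : (SimpleGraph.cycleGraph (k + 3)).Adj i j
    · have h' : A (f i) (f j) = 1 := (f.toHom.map_adj h).2
      simp [hij, h, h']
    · rcases hA.zero_or_one (f i) (f j) with h' | h' <;> simp [hij, h, h']

theorem exists_multiset {a : ℕ → ℤ} (ha : ∀ k, a (k + 3) = (Matrix.cyclicBand k).permanent)
    (N : ℕ) : ∀ {V : Type*} [Fintype V] [DecidableEq V] {A : Matrix V V ℤ}, IsLambdaHat A →
    Fintype.card V = N →
    ∃ L : Multiset ℕ, (∀ p ∈ L, 3 ≤ p) ∧ L.sum = N ∧ (L.map a).prod = A.permanent := by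
  induction N using Nat.strong_induction_on with
  | _ N ih =>
    intro V _ _ A hA hN
    cases isEmpty_or_nonempty V
    · exact ⟨0, by simp, by simp [← hN], by simp [permanent_isEmpty]⟩
    obtain ⟨k, s, e, D, h⟩ := hA.exists_submatrix_eq_fromBlocks
    have hD := (fromBlocks_iff.mp (h ▸ hA.submatrix e)).2
    have hcard : k + 3 + Fintype.card s = N := by
      rw [← hN, ← Fintype.card_congr e, Fintype.card_sum, Fintype.card_fin]
    obtain ⟨L, hL₁, hL₂, hL₃⟩ := ih _ (by omega) hD rfl
    refine ⟨(k + 3) ::ₘ L, ?_, by rw [Multiset.sum_cons, hL₂, hcard], ?_⟩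
    · simpa using hL₁
    · rw [Multiset.map_cons, Multiset.prod_cons, hL₃, ha, ← permanent_submatrix_equiv_self e A, h,
        permanent_fromBlocks_zero]

theorem exists_of_multiset {a : ℕ → ℤ} (ha : ∀ k, a (k + 3) = (Matrix.cyclicBand k).permanent)
    (L : Multiset ℕ) (hL : ∀ p ∈ L, 3 ≤ p) :
    ∃ A : Matrix (Fin L.sum) (Fin L.sum) ℤ, IsLambdaHat A ∧ A.permanent = (L.map a).prod := by
  induction L using Multiset.induction with
  | empty =>
    have : IsEmpty (Fin (Multiset.sum (0 : Multiset ℕ))) := by simpa using Fin.isEmpty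
    exact ⟨1, ⟨isEmptyElim, isEmptyElim, isSymm_one, isEmptyElim⟩, permanent_isEmpty⟩
  | cons p L ih =>
    obtain ⟨A, hA, hper⟩ := ih fun q hq => hL q (Multiset.mem_cons_of_mem hq)
    obtain ⟨k, rfl⟩ := Nat.exists_eq_add_of_le' (hL p (Multiset.mem_cons_self p L))
    let e : Fin ((k + 3) ::ₘ L).sum ≃ Fin (k + 3) ⊕ Fin L.sum :=
      (finCongr (Multiset.sum_cons _ _)).trans finSumFinEquiv.symm
    refine ⟨(fromBlocks (Matrix.cyclicBand k) 0 0 A).submatrix e e,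
      (fromBlocks_iff.mpr ⟨cyclicBand k, hA⟩).submatrix e, ?_⟩
    rw [permanent_submatrix_equiv_self, permanent_fromBlocks_zero, hper, Multiset.map_cons,
      Multiset.prod_cons, ha]

end IsLambdaHat

end Matrix

theorem eq_permanent_cyclicBand {a : ℕ → ℤ} (ha3 : a 3 = 6) (ha4 : a 4 = 9)
    (ha : ∀ m : ℕ, 5 ≤ m → a m = a (m - 1) + a (m - 2) - 2) (k : ℕ) :
    a (k + 3) = (cyclicBand k).permanent := by
  rw [permanent_cyclicBand]
  induction k using Nat.twoStepInduction with
  | zero => simp [ha3, Nat.fib_add_two]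
  | one => simp [ha4, Nat.fib_add_two]
  | more k ih₀ ih₁ =>
    rw [ha _ (by omega), show k + 2 + 3 - 1 = k + 1 + 3 by omega,
      show k + 2 + 3 - 2 = k + 3 by omega, ih₀, ih₁, Nat.fib_add_two (n := k + 3),
      Nat.fib_add_two (n := k + 2)]
    push_cast
    ring

theorem stmt_0 (n : ℕ) (hn : 3 ≤ n) (a : ℕ → ℤ)
    (ha3 : a 3 = 6) (ha4 : a 4 = 9)
    (ha : ∀ m : ℕ, 5 ≤ m → a m = a (m - 1) + a (m - 2) - 2) :
    {x : ℤ | ∃ A ∈ LambdaHat3 n, A.permanent = x} =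
      {x : ℤ | ∃ L : Multiset ℕ, (∀ p ∈ L, 3 ≤ p) ∧ L.sum = n ∧ (L.map a).prod = x} := by
  have ha' := eq_permanent_cyclicBand ha3 ha4 ha
  ext x
  constructor
  · rintro ⟨A, hA, rfl⟩
    exact (mem_LambdaHat3_iff.mp hA).exists_multiset ha' n (Fintype.card_fin n)
  · rintro ⟨L, hL, rfl, rfl⟩
    obtain ⟨A, hA, h⟩ := IsLambdaHat.exists_of_multiset ha' L hL
    exact ⟨A, mem_LambdaHat3_iff.mpr hA, h⟩
end

section
/- Let α, β, γ be real numbers satisfying the triangle inequalities 0 ≤ α ≤ β + γ and 0 ≤ γ ≤ α + β. Put a3 = α³+β³+γ³+3αβγ and a4 = α⁴+β⁴+γ⁴+4αβ²γ+2α²γ², and assume in addition that a4³ ≤ a3⁴ and αγ + β·a3^{1/3} ≤ a3^{2/3}. Then for every integer n ≥ 3 divisible by 3, the maximum of per A over A ∈ Λ̂_n(α,β,γ) equals a3^{n/3}. -/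
open Matrix

/-- `Λ̂_n(α,β,γ)`: matrices `α·Sᵀ + β·I + γ·S` where `S` is the permutation matrix of a
permutation of `{1,…,n}` all of whose cycles have length at least 3 (note `Sᵀ = S⁻¹`). -/
def LambdaHat (n : ℕ) (α β γ : ℝ) : Set (Matrix (Fin n) (Fin n) ℝ) :=
  {A | ∃ s : Equiv.Perm (Fin n), (∀ x, s x ≠ x ∧ s (s x) ≠ x) ∧
    A = α • ((s⁻¹).permMatrix ℝ) + β • (1 : Matrix (Fin n) (Fin n) ℝ) + γ • (s.permMatrix ℝ)}

/-- The state of the edge from `v` to `s v` records whether a permutation `σ` sends `v` to `s v`,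
and whether it sends `s v` to `v`. The entry at `p q` is the weight of a point whose incoming
edge has state `p` and whose outgoing edge has state `q`, and `0` if these are incompatible. -/
def edgeTransfer (α β γ : ℝ) : Matrix (Bool × Bool) (Bool × Bool) ℝ := fun p q =>
  if (q.1 && p.2) || (p.1 && q.2) || ((q.1 || p.2) != (p.1 || q.2)) then 0
  else if q.1 then α else if p.2 then γ else β

lemma trace_edgeTransfer_pow_three (α β γ : ℝ) :
    (edgeTransfer α β γ ^ 3).trace = α ^ 3 + β ^ 3 + γ ^ 3 + 3 * α * β * γ := by
  simp [pow_succ, Matrix.trace, Matrix.mul_apply, Fintype.sum_prod_type, edgeTransfer]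
  ring

lemma trace_edgeTransfer_pow_four (α β γ : ℝ) :
    (edgeTransfer α β γ ^ 4).trace =
      α ^ 4 + β ^ 4 + γ ^ 4 + 4 * α * β ^ 2 * γ + 2 * α ^ 2 * γ ^ 2 := by
  simp [pow_succ, Matrix.trace, Matrix.mul_apply, Fintype.sum_prod_type, edgeTransfer]
  ring

lemma edgeTransfer_sq (α β γ : ℝ) :
    edgeTransfer α β γ ^ 2 = β • edgeTransfer α β γ + (α * γ) • (1 : Matrix _ _ ℝ) +
      diagonal fun p => if p = (true, false) then α * (α - β - γ)
        else if p = (false, true) then γ * (γ - α - β) else 0 := by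
  ext ⟨a, b⟩ ⟨c, d⟩
  cases a <;> cases b <;> cases c <;> cases d <;>
    simp [sq, Matrix.mul_apply, Fintype.sum_prod_type, edgeTransfer] <;> ring

lemma edgeTransfer_nonneg {α β γ : ℝ} (hα : 0 ≤ α) (hβ : 0 ≤ β) (hγ : 0 ≤ γ) (p q : Bool × Bool) :
    0 ≤ edgeTransfer α β γ p q := by
  unfold edgeTransfer; split_ifs <;> simp [*]

lemma matrix_pow_nonneg {ι : Type*} [Fintype ι] [DecidableEq ι] {M : Matrix ι ι ℝ}
    (hM : ∀ i j, 0 ≤ M i j) (k : ℕ) (i j : ι) : 0 ≤ (M ^ k) i j := by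
  induction k generalizing i j with
  | zero => rw [pow_zero, Matrix.one_apply]; split_ifs <;> simp
  | succ k ih =>
    rw [pow_succ, Matrix.mul_apply]
    exact Finset.sum_nonneg fun l _ => mul_nonneg (ih i l) (hM l j)

lemma trace_edgeTransfer_pow_add_two_le {α β γ : ℝ} (hα : 0 ≤ α) (hαβ : α ≤ β + γ) (hγ : 0 ≤ γ)
    (hγβ : γ ≤ α + β) (m : ℕ) :
    (edgeTransfer α β γ ^ (m + 2)).trace ≤
      β * (edgeTransfer α β γ ^ (m + 1)).trace + α * γ * (edgeTransfer α β γ ^ m).trace := by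
  have hβ : 0 ≤ β := by linarith
  rw [pow_add, edgeTransfer_sq, mul_add, mul_add, Matrix.mul_smul, Matrix.mul_smul, ← pow_succ,
    mul_one, trace_add, trace_add, trace_smul, trace_smul, smul_eq_mul, smul_eq_mul]
  have : (edgeTransfer α β γ ^ m * diagonal fun p => if p = (true, false) then α * (α - β - γ)
        else if p = (false, true) then γ * (γ - α - β) else 0).trace ≤ 0 := by
    refine Finset.sum_nonpos fun p _ => ?_
    rw [diag_apply, mul_diagonal]
    refine mul_nonpos_of_nonneg_of_nonpos
      (matrix_pow_nonneg (edgeTransfer_nonneg hα hβ hγ) m p p) ?_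
    split_ifs
    · exact mul_nonpos_of_nonneg_of_nonpos hα (by linarith)
    · exact mul_nonpos_of_nonneg_of_nonpos hγ (by linarith)
    · exact le_rfl
  linarith

lemma trace_edgeTransfer_pow_le {α β γ t : ℝ} (hα : 0 ≤ α) (hαβ : α ≤ β + γ) (hγ : 0 ≤ γ)
    (hγβ : γ ≤ α + β) (ht : 0 ≤ t) (ht2 : α * γ + β * t ≤ t ^ 2)
    (h3 : (edgeTransfer α β γ ^ 3).trace ≤ t ^ 3) (h4 : (edgeTransfer α β γ ^ 4).trace ≤ t ^ 4)
    {m : ℕ} (hm : 3 ≤ m) : (edgeTransfer α β γ ^ m).trace ≤ t ^ m := by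
  have hβ : 0 ≤ β := by linarith
  induction m using Nat.strong_induction_on with
  | _ m ih =>
    obtain rfl | rfl | h : m = 3 ∨ m = 4 ∨ 5 ≤ m := by omega
    · exact h3
    · exact h4
    obtain ⟨k, rfl⟩ : ∃ k, m = k + 2 := ⟨m - 2, by omega⟩
    calc _ ≤ _ := trace_edgeTransfer_pow_add_two_le hα hαβ hγ hγβ k
      _ ≤ β * t ^ (k + 1) + α * γ * t ^ k := by
        gcongr
        · exact ih _ (by omega) (by omega)
        · exact ih _ (by omega) (by omega)
      _ = (α * γ + β * t) * t ^ k := by ring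
      _ ≤ t ^ 2 * t ^ k := by gcongr
      _ = _ := by ring

lemma apply_some_of_fixed {V : Type*} {s : Equiv.Perm (Option V)} (hs : s none = none) (v : V) :
    s (some v) = some (Equiv.removeNone s v) := by
  refine (Equiv.removeNone_some s (Option.ne_none_iff_exists'.mp fun h => ?_)).symm
  exact Option.some_ne_none v (s.injective (h.trans hs.symm))

lemma exists_apply_some_eq_none {V : Type*} {s : Equiv.Perm (Option V)} (hs : s none ≠ none) :
    ∃ w, s (some w) = none ∧ s none = some (Equiv.removeNone s w) ∧
      ∀ v, v ≠ w → s (some v) = some (Equiv.removeNone s v) := by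
  obtain ⟨w, hw⟩ := s.surjective none
  cases w with
  | none => exact absurd hw hs
  | some w =>
    refine ⟨w, hw, (Equiv.removeNone_none s hw).symm, fun v hv => ?_⟩
    refine (Equiv.removeNone_some s (Option.ne_none_iff_exists'.mp fun h => hv ?_)).symm
    exact Option.some_injective _ (s.injective (h.trans hw.symm))

/-- The partition function of edge-state configurations along the cycles of `s`. -/
def cyclicSum {V S R : Type*} [Fintype V] [DecidableEq V] [Fintype S] [CommSemiring R]
    (M : V → Matrix S S R) (s : Equiv.Perm V) : R :=
  ∑ e : V → S, ∏ v, M v (e v) (e (s v))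

section cyclicSum

variable {V W S R : Type*} [Fintype V] [DecidableEq V] [Fintype W] [DecidableEq W] [Fintype S]
  [CommSemiring R]

lemma cyclicSum_permCongr (f : V ≃ W) (M : W → Matrix S S R) (s : Equiv.Perm W) :
    cyclicSum (M ∘ f) (f.symm.permCongr s) = cyclicSum M s := by
  refine Fintype.sum_equiv (f.arrowCongr (Equiv.refl S)) _ _ fun e => ?_
  refine Fintype.prod_equiv f _ _ fun v => ?_
  simp

lemma cyclicSum_option_of_fixed (M : Option V → Matrix S S R) (s : Equiv.Perm (Option V))
    (hs : s none = none) :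
    cyclicSum M s =
      (M none).trace * cyclicSum (fun v => M (some v)) (Equiv.removeNone s) := by
  rw [cyclicSum, Fintype.sum_equiv Equiv.piOptionEquivProd _
    (fun q => M none q.1 q.1 * ∏ v, M (some v) (q.2 v) (q.2 (Equiv.removeNone s v)))]
  · rw [Fintype.sum_prod_type, Matrix.trace, cyclicSum, Finset.sum_mul_sum]
    rfl
  · intro e
    rw [Fintype.prod_option, hs, Finset.prod_congr rfl (g := fun v => M (some v) (e (some v))
      (e (some (Equiv.removeNone s v)))) fun v _ => by rw [apply_some_of_fixed hs]]
    rfl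

lemma cyclicSum_option_of_ne [DecidableEq S] (M : Option V → Matrix S S R)
    (s : Equiv.Perm (Option V)) (hs : s none ≠ none) :
    cyclicSum M s =
      cyclicSum (fun v => M (some v) * if s (some v) = none then M none else 1)
        (Equiv.removeNone s) := by
  obtain ⟨w, hw, hu, hs'⟩ := exists_apply_some_eq_none hs
  rw [cyclicSum, Fintype.sum_equiv Equiv.piOptionEquivProd _
    (fun q => M (some w) (q.2 w) q.1 * M none q.1 (q.2 (Equiv.removeNone s w)) *
      ∏ v ∈ Finset.univ.erase w, M (some v) (q.2 v) (q.2 (Equiv.removeNone s v)))]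
  · rw [Fintype.sum_prod_type_right, cyclicSum]
    refine Finset.sum_congr rfl fun f _ => ?_
    dsimp only
    rw [← Finset.mul_prod_erase _ _ (Finset.mem_univ w), ← Finset.sum_mul, if_pos hw,
      Matrix.mul_apply]
    congr 1
    refine Finset.prod_congr rfl fun v hv => ?_
    rw [hs' v (Finset.ne_of_mem_erase hv), if_neg (Option.some_ne_none _), mul_one]
  · intro e
    rw [Fintype.prod_option, ← Finset.mul_prod_erase _ _ (Finset.mem_univ w), hu, hw]
    rw [Finset.prod_congr rfl (g := fun v => M (some v) (e (some v))
      (e (some (Equiv.removeNone s v))))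
      fun v hv => by rw [hs' v (Finset.ne_of_mem_erase hv)]]
    simp only [Equiv.piOptionEquivProd, Equiv.coe_fn_mk]
    ring

lemma cyclicSum_refl_prodCongr (M : Matrix S S R) (s : Equiv.Perm V) :
    cyclicSum (fun _ : W × V => M) ((Equiv.refl W).prodCongr s) =
      cyclicSum (fun _ : V => M) s ^ Fintype.card W := by
  rw [cyclicSum, cyclicSum, ← Finset.card_univ, ← Finset.prod_const, Finset.prod_univ_sum,
    Fintype.piFinset_univ]
  refine Fintype.sum_equiv (Equiv.curry W V S) _ _ fun e => ?_
  rw [Fintype.prod_prod_type]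
  rfl

lemma cyclicSum_finRotate_three [DecidableEq S] (M : Matrix S S R) :
    cyclicSum (fun _ : Fin 3 => M) (finRotate 3) = (M ^ 3).trace := by
  let f : (Fin 3 → S) ≃ S × S × S :=
    { toFun := fun e => (e 0, e 2, e 1)
      invFun := fun q => ![q.1, q.2.2, q.2.1]
      left_inv := fun e => by ext i; fin_cases i <;> rfl
      right_inv := fun q => rfl }
  rw [cyclicSum, Fintype.sum_equiv f _ (fun q => M q.1 q.2.2 * M q.2.2 q.2.1 * M q.2.1 q.1)]
  · simp only [Fintype.sum_prod_type, Matrix.trace, Matrix.diag_apply, pow_succ, pow_zero, one_mul,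
      Matrix.mul_apply, Finset.sum_mul]
  · intro e
    rw [Fin.prod_univ_three]
    rfl

lemma cyclicSum_nonneg {M : V → Matrix S S ℝ} (hM : ∀ v i j, 0 ≤ M v i j) (s : Equiv.Perm V) :
    0 ≤ cyclicSum M s :=
  Finset.sum_nonneg fun _ _ => Finset.prod_nonneg fun v _ => hM v _ _

end cyclicSum

lemma cyclicSum_pow_le {S : Type*} [Fintype S] [DecidableEq S] {T : Matrix S S ℝ} {t : ℝ}
    (hT : ∀ i j, 0 ≤ T i j) (ht : 0 ≤ t) (htr : ∀ m, 3 ≤ m → (T ^ m).trace ≤ t ^ m)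
    (V : Type*) [Fintype V] :
    ∀ [DecidableEq V] (s : Equiv.Perm V) (k : V → ℕ), (∀ v, 1 ≤ k v) →
      (∀ v, s v = v → 3 ≤ k v) → (∀ v, s v ≠ v → s (s v) = v → 3 ≤ k v + k (s v)) →
      cyclicSum (fun v => T ^ k v) s ≤ t ^ ∑ v, k v := by
  refine Fintype.induction_empty_option (P := fun V _ => ∀ [DecidableEq V] (s : Equiv.Perm V)
    (k : V → ℕ), (∀ v, 1 ≤ k v) → (∀ v, s v = v → 3 ≤ k v) →
      (∀ v, s v ≠ v → s (s v) = v → 3 ≤ k v + k (s v)) →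
      cyclicSum (fun v => T ^ k v) s ≤ t ^ ∑ v, k v) ?_ ?_ ?_ V
  · classical
    intro V W _ f ih _ s k h1 h2 h3
    let := Fintype.ofEquiv W f.symm
    have := ih (f.symm.permCongr s) (k ∘ f) (fun v => h1 _)
      (fun v hv => h2 _ (by simpa [Equiv.symm_apply_eq] using hv))
      (fun v hv hv' => by
        have := h3 (f v) (by simpa [Equiv.symm_apply_eq] using hv)
          (by simpa [Equiv.symm_apply_eq] using hv')
        simpa using this)
    rw [← cyclicSum_permCongr f, ← f.sum_comp k]
    exact this
  · intro _ s k _ _ _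
    simp [cyclicSum]
  · classical
    intro V _ ih _ s k h1 h2 h3
    obtain rfl : ‹DecidableEq (Option V)› = Option.instDecidableEq := Subsingleton.elim _ _
    rw [Fintype.sum_option]
    by_cases hs : s none = none
    · have hs' := apply_some_of_fixed hs
      rw [cyclicSum_option_of_fixed _ _ hs, pow_add]
      refine mul_le_mul (htr _ (h2 _ hs)) (ih _ _ (fun v => h1 _) (fun v hv => ?_)
        fun v hv hv' => ?_) (cyclicSum_nonneg (fun _ => matrix_pow_nonneg hT _) _) (by positivity)
      · exact h2 (some v) (by rw [hs', hv])
      · have := h3 (some v) (by simpa [hs'] using hv) (by simpa [hs'] using hv')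
        rwa [hs'] at this
    · obtain ⟨w, hw, hu, hs'⟩ := exists_apply_some_eq_none hs
      have hiff (v : V) : s (some v) = none ↔ v = w :=
        ⟨fun h => by_contra fun h' => by simp [hs' v h'] at h, fun h => h ▸ hw⟩
      rw [cyclicSum_option_of_ne _ _ hs]
      have := ih (Equiv.removeNone s) (fun v => k (some v) + if v = w then k none else 0)
        (fun v => le_add_right (h1 _)) ?_ ?_
      · rw [Finset.sum_add_distrib, Finset.sum_ite_eq' , if_pos (Finset.mem_univ w), add_comm] at this
        convert this using 2
        funext v
        by_cases hv : v = w <;> simp [hiff, hv, pow_add]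
      · intro v hv
        by_cases hvw : v = w
        · subst hvw
          have := h3 (some v) (by simp [hw]) (by rw [hw, hu, hv])
          simpa [hw] using this
        · have := h2 (some v) (by rw [hs' v hvw, hv])
          omega
      · intro v hv hv'
        by_cases hvw : v = w
        · have := h1 (some v)
          have := h1 none
          have := h1 (some (Equiv.removeNone s v))
          simp only [if_pos hvw]
          omega
        · by_cases hvw' : Equiv.removeNone s v = w
          · have := h1 (some v)
            have := h1 none
            have := h1 (some (Equiv.removeNone s v))
            simp only [if_pos hvw']
            omega
          · have := h3 (some v) (by simpa [hs' v hvw] using hv)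
              (by rw [hs' v hvw, hs' _ hvw', hv'])
            rw [hs' v hvw] at this
            omega

lemma edgeTransfer_ne_zero {α β γ : ℝ} {p q : Bool × Bool} (h : edgeTransfer α β γ p q ≠ 0) :
    ¬(q.1 ∧ p.2) ∧ ¬(p.1 ∧ q.2) ∧ ((q.1 ∨ p.2) ↔ (p.1 ∨ q.2)) := by
  obtain ⟨a, b⟩ := p
  obtain ⟨c, d⟩ := q
  cases a <;> cases b <;> cases c <;> cases d <;> simp_all [edgeTransfer]

lemma add_permMatrix_apply {V : Type*} [DecidableEq V] (α β γ : ℝ)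
    {s : Equiv.Perm V} (hs : ∀ x, s x ≠ x ∧ s (s x) ≠ x) (i j : V) :
    (α • ((s⁻¹).permMatrix ℝ) + β • (1 : Matrix V V ℝ) + γ • (s.permMatrix ℝ)) j i =
      if j = s i then α else if s j = i then γ else if j = i then β else 0 := by
  have e1 : (s⁻¹ j = i) ↔ j = s i := by rw [Equiv.Perm.inv_eq_iff_eq]
  simp only [Matrix.add_apply, Matrix.smul_apply, PEquiv.toMatrix_apply, Equiv.toPEquiv_apply,
    Option.mem_some_iff, Matrix.one_apply, smul_eq_mul, e1]
  by_cases ha : j = s i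
  · subst ha
    simp [(hs i).2, (hs i).1]
  by_cases hb : s j = i
  · subst hb
    simp [(hs j).1.symm, (hs j).2.symm]
  simp [ha, hb]

lemma prod_add_permMatrix_apply {V : Type*} [Fintype V] [DecidableEq V] (α β γ : ℝ)
    {s : Equiv.Perm V} (hs : ∀ x, s x ≠ x ∧ s (s x) ≠ x) {σ : Equiv.Perm V}
    (hσ : ∀ i, σ i = s i ∨ s (σ i) = i ∨ σ i = i) :
    ∏ i, (α • ((s⁻¹).permMatrix ℝ) + β • (1 : Matrix V V ℝ) + γ • (s.permMatrix ℝ)) (σ i) i =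
      ∏ v, edgeTransfer α β γ (decide (σ v = s v), decide (σ (s v) = v))
        (decide (σ (s v) = s (s v)), decide (σ (s (s v)) = s v)) := by
  rw [← Equiv.prod_comp s]
  refine Finset.prod_congr rfl fun v _ => ?_
  rw [add_permMatrix_apply α β γ hs]
  have hbc : σ (s v) = v → σ (s v) ≠ s (s v) := fun h h' => (hs v).2 (h'.symm.trans h)
  have had : σ v = s v → σ (s (s v)) ≠ s v := fun h h' => (hs v).2 (σ.injective (h'.trans h.symm))
  have hout : (σ (s v) = s (s v) ∨ σ (s v) = v) ↔ σ (s v) ≠ s v := by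
    have := hσ (s v)
    rw [s.apply_eq_iff_eq] at this
    have := (hs v).1
    have := (hs (s v)).1
    grind
  have hin : (σ v = s v ∨ σ (s (s v)) = s v) ↔ σ (s v) ≠ s v := by
    refine ⟨?_, fun h => ?_⟩
    · rintro (h | h) h'
      · exact (hs v).1 (σ.injective (h'.trans h.symm))
      · exact (hs (s v)).1 (σ.injective (h.trans h'.symm))
    · obtain ⟨u, hu⟩ := σ.surjective (s v)
      rcases hσ u with h1 | h1 | h1
      · rw [hu, s.apply_eq_iff_eq] at h1
        exact Or.inl (h1 ▸ hu)
      · rw [hu] at h1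
        exact Or.inr (h1 ▸ hu)
      · exact absurd (by rwa [h1.symm.trans hu] at hu) h
  simp only [s.apply_eq_iff_eq]
  unfold edgeTransfer
  by_cases a : σ v = s v <;> by_cases b : σ (s v) = v <;> by_cases c : σ (s v) = s (s v) <;>
    by_cases d : σ (s (s v)) = s v <;> by_cases e : σ (s v) = s v <;>
    first
    | exact absurd c (hbc b)
    | exact absurd d (had a)
    | (exfalso; tauto)
    | simp [a, b, c, d, e, (hs v).1, (hs v).1.symm, (hs v).2, (hs v).2.symm]

lemma exists_perm_of_edgeStates {V : Type*} [DecidableEq V] {s : Equiv.Perm V}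
    (hs : ∀ x, s x ≠ x ∧ s (s x) ≠ x) {e : V → Bool × Bool}
    (he : ∀ v, ¬((e (s v)).1 ∧ (e v).2) ∧ ¬((e v).1 ∧ (e (s v)).2) ∧
      (((e (s v)).1 ∨ (e v).2) ↔ ((e v).1 ∨ (e (s v)).2))) :
    ∃ σ : Equiv.Perm V, (∀ i, σ i = s i ∨ s (σ i) = i ∨ σ i = i) ∧
      ∀ v, (decide (σ v = s v), decide (σ (s v) = v)) = e v := by
  have he' (v : V) := he (s.symm v)
  simp only [Equiv.apply_symm_apply] at he'
  let σ : Equiv.Perm V :=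
    { toFun := fun v => if (e v).1 then s v else if (e (s.symm v)).2 then s.symm v else v
      invFun := fun v => if (e (s.symm v)).1 then s.symm v else if (e v).2 then s v else v
      left_inv := fun v => by
        by_cases h1 : (e v).1
        · simp [h1]
        by_cases h2 : (e (s.symm v)).2
        · have := (he' (s.symm v)).2.1
          simp_all
        have := (he' v).2.2
        simp_all
      right_inv := fun v => by
        by_cases h1 : (e (s.symm v)).1
        · simp [h1]
        by_cases h2 : (e v).2
        · have := (he v).1
          simp_all
        have := (he' v).2.2
        have h3 : ¬(e v).1 ∧ ¬(e (s.symm v)).2 := by tauto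
        simp [h1, h2, h3] }
  have hσ (v : V) : σ v = if (e v).1 then s v else if (e (s.symm v)).2 then s.symm v else v := rfl
  refine ⟨σ, fun v => ?_, fun v => Prod.ext ?_ ?_⟩
  · rw [hσ]
    split_ifs <;> simp
  · have h1 := (hs v).1.symm
    have h2 : s.symm v ≠ s v := fun h => (hs v).2 (by rw [← h]; simp)
    rw [hσ]
    split_ifs <;> simp_all
  · have h1 := (hs v).1
    have h2 := (hs v).2
    have h3 := (he v).1
    change decide (σ (s v) = v) = _
    rw [hσ, Equiv.symm_apply_apply]
    split_ifs <;> simp_all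

lemma permanent_eq_cyclicSum {V : Type*} [Fintype V] [DecidableEq V] (α β γ : ℝ)
    {s : Equiv.Perm V} (hs : ∀ x, s x ≠ x ∧ s (s x) ≠ x) :
    (α • ((s⁻¹).permMatrix ℝ) + β • (1 : Matrix V V ℝ) + γ • (s.permMatrix ℝ)).permanent =
      cyclicSum (fun _ => edgeTransfer α β γ) s := by
  have hnear (σ : Equiv.Perm V) (h : ∏ i, (α • ((s⁻¹).permMatrix ℝ) + β • (1 : Matrix V V ℝ) +
      γ • (s.permMatrix ℝ)) (σ i) i ≠ 0) (i : V) : σ i = s i ∨ s (σ i) = i ∨ σ i = i := by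
    have := Finset.prod_ne_zero_iff.mp h i (Finset.mem_univ i)
    rw [add_permMatrix_apply α β γ hs] at this
    by_contra! hc
    simp [hc] at this
  rw [permanent, cyclicSum]
  refine Finset.sum_bij_ne_zero (fun σ _ _ v => (decide (σ v = s v), decide (σ (s v) = v)))
    (fun _ _ _ => Finset.mem_univ _) ?_ ?_ ?_
  · intro σ _ hσ τ _ hτ h
    ext v
    obtain ⟨w, rfl⟩ := s.surjective v
    have h1 : (σ (s w) = s (s w)) ↔ (τ (s w) = s (s w)) := by
      simpa using congrArg Prod.fst (congrFun h (s w))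
    have h2 : (σ (s w) = w) ↔ (τ (s w) = w) := by
      simpa using congrArg Prod.snd (congrFun h w)
    have h3 := hnear σ hσ (s w)
    have h4 := hnear τ hτ (s w)
    rw [s.apply_eq_iff_eq] at h3 h4
    grind
  · intro e _ he
    obtain ⟨σ, hσ, hσe⟩ := exists_perm_of_edgeStates hs fun v =>
      edgeTransfer_ne_zero (Finset.prod_ne_zero_iff.mp he v (Finset.mem_univ v))
    refine ⟨σ, Finset.mem_univ _, ?_, funext hσe⟩
    rw [prod_add_permMatrix_apply α β γ hs hσ]
    simpa only [hσe] using he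
  · intro σ _ hσ
    exact prod_add_permMatrix_apply α β γ hs (hnear σ hσ)

theorem stmt_6 (α β γ : ℝ)
    (h1 : 0 ≤ α) (h2 : α ≤ β + γ) (h3 : 0 ≤ γ) (h4 : γ ≤ α + β)
    (a3 a4 : ℝ)
    (ha3 : a3 = α ^ 3 + β ^ 3 + γ ^ 3 + 3 * α * β * γ)
    (ha4 : a4 = α ^ 4 + β ^ 4 + γ ^ 4 + 4 * α * β ^ 2 * γ + 2 * α ^ 2 * γ ^ 2)
    (h5 : a4 ^ 3 ≤ a3 ^ 4)
    (h6 : α * γ + β * a3 ^ ((1 : ℝ) / 3) ≤ a3 ^ ((2 : ℝ) / 3))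
    (n : ℕ) (hn : 3 ≤ n) (hn3 : 3 ∣ n) :
    IsGreatest {x : ℝ | ∃ A ∈ LambdaHat n α β γ, A.permanent = x} (a3 ^ (n / 3)) := by
  have hβ : 0 ≤ β := by linarith
  have ha30 : 0 ≤ a3 := by rw [ha3]; positivity
  obtain ⟨m, rfl⟩ := hn3
  rw [Nat.mul_div_cancel_left m (by norm_num)]
  constructor
  · let f : Fin (3 * m) ≃ Fin m × Fin 3 := (finCongr (mul_comm 3 m)).trans finProdFinEquiv.symm
    let r : Equiv.Perm (Fin m × Fin 3) := (Equiv.refl (Fin m)).prodCongr (finRotate 3)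
    have hr (y : Fin m × Fin 3) : r y ≠ y ∧ r (r y) ≠ y := by
      have : ∀ i, finRotate 3 i ≠ i ∧ finRotate 3 (finRotate 3 i) ≠ i := by decide
      exact ⟨fun h => (this y.2).1 (congrArg Prod.snd h),
        fun h => (this y.2).2 (congrArg Prod.snd h)⟩
    have hs (x : Fin (3 * m)) : f.symm.permCongr r x ≠ x ∧
        f.symm.permCongr r (f.symm.permCongr r x) ≠ x := by
      simpa [Equiv.symm_apply_eq] using hr (f x)
    refine ⟨_, ⟨f.symm.permCongr r, hs, rfl⟩, ?_⟩
    rw [permanent_eq_cyclicSum α β γ hs]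
    refine (cyclicSum_permCongr f (fun _ => edgeTransfer α β γ) r).trans ?_
    rw [cyclicSum_refl_prodCongr, cyclicSum_finRotate_three, trace_edgeTransfer_pow_three, ← ha3,
      Fintype.card_fin]
  · rintro _ ⟨_, ⟨s, hs, rfl⟩, rfl⟩
    rw [permanent_eq_cyclicSum α β γ hs]
    set t := a3 ^ ((1 : ℝ) / 3)
    have ht : 0 ≤ t := Real.rpow_nonneg ha30 _
    have ht3 : t ^ 3 = a3 := by
      rw [← Real.rpow_natCast, ← Real.rpow_mul ha30]
      norm_num
    have ht2 : a3 ^ ((2 : ℝ) / 3) = t ^ 2 := by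
      rw [← Real.rpow_natCast t, ← Real.rpow_mul ha30]
      norm_num
    have ht4 : a4 ≤ t ^ 4 := by
      refine le_of_pow_le_pow_left₀ (n := 3) (by norm_num) (by positivity) (h5.trans_eq ?_)
      rw [← ht3]
      ring
    have := cyclicSum_pow_le (edgeTransfer_nonneg h1 hβ h3) ht
      (fun k hk => trace_edgeTransfer_pow_le h1 h2 h3 h4 ht (h6.trans_eq ht2)
        (by rw [trace_edgeTransfer_pow_three, ht3, ha3])
        (by rw [trace_edgeTransfer_pow_four, ← ha4]; exact ht4) hk)
      (Fin (3 * m)) s (fun _ => 1) (fun _ => le_rfl) (fun v h => absurd h (hs v).1)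
      (fun v _ h => absurd h (hs v).2)
    simpa [pow_mul, ht3] using this
end

section
/- Let α, γ be real numbers with 0 ≤ α ≤ (2^{1/3} − 1)^{1/4}·γ. Then for every integer n ≥ 3 divisible by 3, the maximum of per A over A ∈ Λ̂_n(α, γ−α, γ) equals 2^{n/3}·γⁿ. -/
open Matrix

open Equiv Equiv.Perm

section Block

variable {ι R : Type*} [Fintype ι] [DecidableEq ι] [CommSemiring R]

theorem Matrix.permanent_eq_mul_of_block (M : Matrix ι ι R) (p : ι → Prop) [DecidablePred p]
    (hM : ∀ x y, p x → ¬ p y → M y x = 0) :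
    M.permanent = (M.submatrix (fun x : {x // p x} => (x : ι)) (fun x : {x // p x} => (x : ι))).permanent *
      (M.submatrix (fun x : {x // ¬ p x} => (x : ι)) (fun x : {x // ¬ p x} => (x : ι))).permanent := by
  simp only [permanent, submatrix_apply]
  rw [Finset.sum_mul_sum, ← Finset.sum_product', Finset.univ_product_univ]
  symm
  refine Fintype.sum_of_injective (subtypeCongrHom p) (subtypeCongrHom_injective p) _ _ ?_ ?_
  · intro σ hσ
    by_cases h : ∀ x, p x → p (σ x)
    · have hp : ∀ x, p (σ x) ↔ p x := fun x =>
        ⟨fun hx => by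
          simpa using (perm_symm_mapsTo_of_mapsTo (s := {x | p x}) σ fun x hx => h x hx) hx, h x⟩
      refine absurd ⟨(σ.subtypePerm hp, σ.subtypePerm fun x => not_congr (hp x)), ?_⟩ hσ
      ext x
      by_cases hx : p x <;> simp [subtypeCongrHom, hx]
    · push Not at h
      obtain ⟨x, hx, hσx⟩ := h
      exact Finset.prod_eq_zero (Finset.mem_univ x) (hM _ _ hx hσx)
  · intro σ
    rw [← Fintype.prod_subtype_mul_prod_subtype p]
    simp [subtypeCongrHom]

end Block

section Cycle

variable {ι : Type*} [Fintype ι] [DecidableEq ι]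

omit [DecidableEq ι] in
theorem Equiv.Perm.forall_of_sameCycle {s : Perm ι} (hs : ∀ x y, s.SameCycle x y) {P : ι → Prop}
    (x : ι) (hx : P x) (hP : ∀ x, P x → P (s x)) (y : ι) : P y := by
  obtain ⟨i, -, -, rfl⟩ := (hs x y).exists_pow_eq'
  induction i with
  | zero => exact hx
  | succ i ih => rw [pow_succ', mul_apply]; exact hP _ ih

theorem Equiv.Perm.sign_of_forall_sameCycle [Nonempty ι] {s : Perm ι}
    (hs : ∀ x y, s.SameCycle x y) (hfix : ∀ x, s x ≠ x) :
    sign s = -(-1) ^ Fintype.card ι := by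
  obtain ⟨x⟩ := ‹Nonempty ι›
  have hc : s.IsCycle := ⟨x, hfix x, fun y _ => hs x y⟩
  have : s.support = Finset.univ := by ext y; simp [hfix y]
  rw [hc.sign, this, Finset.card_univ]

omit [DecidableEq ι] in
theorem Equiv.Perm.eq_of_two_steps {s σ : Perm ι} (hs : ∀ x y, s.SameCycle x y)
    (h : ∀ x, s x ≠ x ∧ s (s x) ≠ x)
    (hσ : ∀ x, σ x = s x ∨ σ x = x ∨ s (σ x) = x)
    (x : ι) (h1 : σ x = s x) (h2 : σ (s x) = s (s x)) : σ = s := by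
  ext y
  refine (forall_of_sameCycle hs (P := fun z => σ z = s z ∧ σ (s z) = s (s z)) x ⟨h1, h2⟩ ?_ y).1
  rintro z ⟨hz1, hz2⟩
  refine ⟨hz2, ?_⟩
  rcases hσ (s (s z)) with e | e | e
  · exact e
  · exact absurd (σ.injective (e.trans hz2.symm)) (h (s z)).1
  · exact absurd (σ.injective ((s.injective e).trans hz1.symm)) (h z).2

theorem Equiv.Perm.eq_or_eq_inv_or_involutive {s σ : Perm ι} (hs : ∀ x y, s.SameCycle x y)
    (h : ∀ x, s x ≠ x ∧ s (s x) ≠ x)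
    (hσ : ∀ x, σ x = s x ∨ σ x = x ∨ s (σ x) = x) :
    σ = s ∨ σ = s⁻¹ ∨ ∀ x, σ (σ x) = x := by
  by_contra! hc
  obtain ⟨hc1, hc2, x, hx⟩ := hc
  rcases hσ x with e | e | e
  · rcases hσ (σ x) with e' | e' | e'
    · rw [e] at e'
      exact hc1 (eq_of_two_steps hs h hσ x e e')
    · exact (h x).1 (e ▸ σ.injective e')
    · exact hx (s.injective (e'.trans e))
  · exact hx (by rw [e, e])
  · have ex : σ x = s⁻¹ x := by rw [eq_inv_iff_eq, e]
    rcases hσ (σ x) with e' | e' | e'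
    · exact hx (e'.trans e)
    · have := σ.injective e'
      rw [this] at e
      exact (h x).1 e
    · refine hc2 (eq_of_two_steps (s := s⁻¹) (fun x y => sameCycle_inv.2 (hs x y)) ?_ ?_ x ex ?_)
      · intro y
        rw [ne_eq, ne_eq, inv_eq_iff_eq, inv_eq_iff_eq, inv_eq_iff_eq]
        exact ⟨fun e => (h y).1 e.symm, fun e => (h y).2 e.symm⟩
      · intro y
        rw [eq_inv_iff_eq, inv_eq_iff_eq]
        have := hσ y
        tauto
      · rw [← ex, eq_inv_iff_eq, e']

theorem Equiv.Perm.sign_of_involutive {s σ : Perm ι}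
    (h : ∀ x, s x ≠ x ∧ s (s x) ≠ x)
    (hσ : ∀ x, σ x = s x ∨ σ x = x ∨ s (σ x) = x) (hinv : ∀ x, σ (σ x) = x) :
    sign σ = (-1) ^ (Finset.univ.filter fun x => σ x = s x).card := by
  set D := Finset.univ.filter fun x => σ x = s x with hD
  have hsup : σ.support = D ∪ D.map σ.toEmbedding := by
    ext x
    simp only [mem_support, Finset.mem_union, Finset.mem_map_equiv, hD, Finset.mem_filter,
      Finset.mem_univ, true_and, apply_symm_apply]
    have e : σ.symm x = σ x := by rw [symm_apply_eq, hinv]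
    rw [e, eq_comm (a := x)]
    constructor
    · have := hσ x
      tauto
    · rintro (e | e) h'
      · exact (h x).1 (e ▸ h')
      · exact (h x).1 (by rwa [h'] at e)
  have hdisj : _root_.Disjoint D (D.map σ.toEmbedding) := by
    rw [Finset.disjoint_left]
    intro x hx hx'
    simp only [Finset.mem_map_equiv, hD, Finset.mem_filter,
      Finset.mem_univ, true_and, apply_symm_apply] at hx hx'
    have e : σ.symm x = σ x := by rw [symm_apply_eq, hinv]
    rw [e, hx] at hx'
    exact (h x).2 hx'.symm
  have h2 : ∀ n ∈ σ.cycleType, n = 2 := by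
    intro n hn
    have h1 := two_le_of_mem_cycleType hn
    have h3 : orderOf σ ∣ 2 := orderOf_dvd_of_pow_eq_one (by ext x; simp [pow_two, hinv])
    exact le_antisymm (Nat.le_of_dvd two_pos ((dvd_of_mem_cycleType hn).trans h3)) h1
  have hsum := sum_cycleType σ
  rw [hsup, Finset.card_union_of_disjoint hdisj, Finset.card_map] at hsum
  have hrep := Multiset.eq_replicate_of_mem h2
  have hcard : σ.cycleType.sum = σ.cycleType.card * 2 := by
    conv_lhs => rw [hrep, Multiset.sum_replicate, smul_eq_mul]
  have : σ.cycleType.card = D.card := by omega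
  rw [sign_of_cycleType, hcard, this, pow_add, mul_comm, pow_mul']
  simp

variable {R : Type*} [CommRing R]

theorem Matrix.det_smul_one_add_smul_permMatrix_inv [Nonempty ι] {s : Perm ι}
    (hs : ∀ x y, s.SameCycle x y) (h : ∀ x, s x ≠ x) (a b : R) :
    (a • (1 : Matrix ι ι R) + b • (s⁻¹).permMatrix R).det =
      a ^ Fintype.card ι + (sign s : ℤ) * b ^ Fintype.card ι := by
  have hone : (1 : Perm ι) ≠ s := by
    rintro rfl
    exact h (Classical.arbitrary ι) rfl
  rw [det_apply', Finset.sum_eq_add_of_mem (1 : Perm ι) s (Finset.mem_univ _) (Finset.mem_univ _)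
    hone]
  · have hinv (x : ι) : s.symm x ≠ x := fun e => h x ((symm_apply_eq s).1 e).symm
    simp [PEquiv.toMatrix_apply, toPEquiv_apply, h, hinv]
  · rintro σ - ⟨h1, h2⟩
    by_cases hσ : ∀ x, σ x = x ∨ σ x = s x
    · refine absurd ?_ h2
      obtain ⟨x, hx⟩ : ∃ x, σ x ≠ x := by
        by_contra! hc
        exact h1 (Perm.ext hc)
      ext y
      refine forall_of_sameCycle hs (P := fun z => σ z = s z) x ((hσ x).resolve_left hx) ?_ y
      intro z hz
      exact (hσ (s z)).resolve_left fun e => h z (σ.injective (e.trans hz.symm))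
    · push Not at hσ
      obtain ⟨x, hx1, hx2⟩ := hσ
      rw [Finset.prod_eq_zero (Finset.mem_univ x), mul_zero]
      simp [PEquiv.toMatrix_apply, toPEquiv_apply, hx1, hx2, Equiv.symm_apply_eq]

/-- The matrix `a·Sᵀ + b·I + c·S`, where `S` is the permutation matrix of `s`. -/
def Equiv.Perm.bandMatrix (s : Perm ι) (a b c : R) : Matrix ι ι R :=
  a • (s⁻¹).permMatrix R + b • 1 + c • s.permMatrix R

omit [Fintype ι] in
theorem Equiv.Perm.bandMatrix_apply (s : Perm ι) (a b c : R) (x y : ι) :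
    s.bandMatrix a b c y x =
      (if y = s x then a else 0) + (if y = x then b else 0) + (if s y = x then c else 0) := by
  simp [bandMatrix, Matrix.one_apply, PEquiv.toMatrix_apply, toPEquiv_apply, Equiv.symm_apply_eq]

theorem Equiv.Perm.permanent_bandMatrix_sub_det {s : Perm ι} [Nonempty ι]
    (hs : ∀ x y, s.SameCycle x y) (h : ∀ x, s x ≠ x ∧ s (s x) ≠ x) (a b c : R) :
    (s.bandMatrix a b c).permanent - (s.bandMatrix (-a) b c).det =
      (a ^ Fintype.card ι - (sign s : ℤ) * (-a) ^ Fintype.card ι) +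
      (c ^ Fintype.card ι - (sign s : ℤ) * c ^ Fintype.card ι) := by
  have hne : s ≠ s⁻¹ := by
    intro e
    obtain ⟨x⟩ := ‹Nonempty ι›
    apply (h x).2
    rw [← eq_inv_iff_eq, ← e]
  rw [Matrix.permanent, Matrix.det_apply', ← Finset.sum_sub_distrib,
    Finset.sum_eq_add_of_mem s s⁻¹ (Finset.mem_univ _) (Finset.mem_univ _) hne]
  · have h1 (a : R) (x : ι) : s.bandMatrix a b c (s x) x = a := by
      simp [bandMatrix_apply, h]
    have h2 (a : R) (x : ι) : s.bandMatrix a b c (s⁻¹ x) x = c := by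
      have e1 : s⁻¹ x ≠ s x := fun e => (h x).2 (inv_eq_iff_eq.1 e).symm
      have e2 : s⁻¹ x ≠ x := fun e => (h x).1 (inv_eq_iff_eq.1 e).symm
      rw [bandMatrix_apply, if_neg e1, if_neg e2, if_pos (inv_eq_iff_eq.1 rfl).symm]
      ring
    simp only [h1, h2, Finset.prod_const, Finset.card_univ, sign_inv]
  · rintro σ - ⟨hσ1, hσ2⟩
    by_cases hσ : ∀ x, σ x = s x ∨ σ x = x ∨ s (σ x) = x
    · have hinv := ((eq_or_eq_inv_or_involutive hs h hσ).resolve_left hσ1).resolve_left hσ2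
      have hterm (x : ι) : s.bandMatrix (-a) b c (σ x) x =
          (if σ x = s x then -1 else 1) * s.bandMatrix a b c (σ x) x := by
        simp only [bandMatrix_apply]
        by_cases e : σ x = s x
        · simp [e, h]
        · simp [e]
      simp_rw [hterm, Finset.prod_mul_distrib]
      rw [Finset.prod_ite, sign_of_involutive h hσ hinv]
      simp [← mul_assoc, ← mul_pow]
    · push Not at hσ
      obtain ⟨x, hx1, hx2, hx3⟩ := hσ
      rw [Finset.prod_eq_zero (Finset.mem_univ x), Finset.prod_eq_zero (Finset.mem_univ x)]
      · simp
      all_goals simp [bandMatrix_apply, hx1, hx2, hx3]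

theorem Equiv.Perm.permanent_bandMatrix_of_sameCycle {s : Perm ι} [Nonempty ι]
    (hs : ∀ x y, s.SameCycle x y) (h : ∀ x, s x ≠ x ∧ s (s x) ≠ x) (a c : R) :
    (s.bandMatrix a (c - a) c).permanent =
      2 * c ^ Fintype.card ι + (1 + (-1) ^ Fintype.card ι) * a ^ Fintype.card ι := by
  have hfac : s.bandMatrix (-a) (c - a) c =
      ((1 : R) • (1 : Matrix ι ι R) + (1 : R) • ((s⁻¹)⁻¹).permMatrix R) *
        (c • (1 : Matrix ι ι R) + (-a) • (s⁻¹).permMatrix R) := by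
    have : s.permMatrix R * (s⁻¹).permMatrix R = 1 := by
      rw [← Matrix.permMatrix_mul, inv_mul_cancel, Matrix.permMatrix_one]
    rw [inv_inv, bandMatrix, add_mul, mul_add, mul_add]
    simp only [Matrix.smul_mul, Matrix.mul_smul, this, Matrix.one_mul, Matrix.mul_one]
    module
  have hinv : ∀ x, s⁻¹ x ≠ x := fun x e => (h x).1 (inv_eq_iff_eq.1 e).symm
  have key := permanent_bandMatrix_sub_det hs h a (c - a) c
  rw [hfac, Matrix.det_mul, Matrix.det_smul_one_add_smul_permMatrix_inv hs (fun x => (h x).1),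
    Matrix.det_smul_one_add_smul_permMatrix_inv (fun x y => sameCycle_inv.2 (hs x y)) hinv, sign_inv,
    sign_of_forall_sameCycle hs (fun x => (h x).1), neg_pow a] at key
  push_cast at key
  have hsq : ((-1 : R) ^ Fintype.card ι) * (-1) ^ Fintype.card ι = 1 := by
    simp [← mul_pow]
  simp only [one_pow] at key
  linear_combination key + a ^ Fintype.card ι * (-1) ^ Fintype.card ι * hsq

end Cycle

theorem two_mul_pow_add_le {α γ τ : ℝ} (h1 : 0 ≤ α) (hαγ : α ≤ γ) (hτ : τ ^ 3 = 2)
    (hτ1 : 1 ≤ τ) (h4 : α ^ 4 ≤ (τ - 1) * γ ^ 4) {k : ℕ} (hk : 3 ≤ k) :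
    2 * γ ^ k + (1 + (-1) ^ k) * α ^ k ≤ (τ * γ) ^ k := by
  have hγ : 0 ≤ γ := h1.trans hαγ
  rw [mul_pow]
  rcases Nat.even_or_odd k with he | ho
  · rw [he.neg_one_pow]
    obtain rfl | hk6 : k = 4 ∨ 6 ≤ k := by
      obtain ⟨m, rfl⟩ := he
      omega
    · have : τ ^ 4 = 2 * τ := by rw [pow_succ, hτ]
      rw [this]
      linarith
    · have h6 : 4 ≤ τ ^ k := calc
        (4 : ℝ) = τ ^ 6 := by rw [show τ ^ 6 = (τ ^ 3) ^ 2 by ring, hτ]; norm_num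
        _ ≤ τ ^ k := pow_le_pow_right₀ hτ1 hk6
      have := pow_le_pow_left₀ h1 hαγ k
      nlinarith [mul_le_mul_of_nonneg_right h6 (pow_nonneg hγ k)]
  · rw [ho.neg_one_pow, add_neg_cancel, zero_mul, add_zero]
    have h3 : 2 ≤ τ ^ k := hτ ▸ pow_le_pow_right₀ hτ1 hk
    exact mul_le_mul_of_nonneg_right h3 (pow_nonneg hγ k)

theorem Equiv.Perm.permanent_bandMatrix_nonneg {ι : Type*} [Fintype ι] [DecidableEq ι]
    (s : Perm ι) {a b c : ℝ} (ha : 0 ≤ a) (hb : 0 ≤ b) (hc : 0 ≤ c) :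
    0 ≤ (s.bandMatrix a b c).permanent := by
  refine Finset.sum_nonneg fun σ _ => Finset.prod_nonneg fun x _ => ?_
  rw [bandMatrix_apply]
  positivity

theorem Equiv.Perm.bandMatrix_submatrix {ι R : Type*} [Fintype ι] [DecidableEq ι] [CommRing R]
    (s : Perm ι) (p : ι → Prop) (hp : ∀ x, p (s x) ↔ p x) (a b c : R) :
    (s.bandMatrix a b c).submatrix (fun x : {x // p x} => (x : ι)) (fun x : {x // p x} => (x : ι)) =
      (s.subtypePerm hp).bandMatrix a b c := by
  classical
  ext x y
  simp [bandMatrix_apply, Subtype.ext_iff]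

theorem Equiv.Perm.permanent_bandMatrix_le {α γ τ : ℝ} (h1 : 0 ≤ α) (hαγ : α ≤ γ)
    (hτ : τ ^ 3 = 2) (hτ1 : 1 ≤ τ) (h4 : α ^ 4 ≤ (τ - 1) * γ ^ 4)
    {ι : Type*} [Fintype ι] [DecidableEq ι] (s : Perm ι) (h : ∀ x, s x ≠ x ∧ s (s x) ≠ x) :
    (s.bandMatrix α (γ - α) γ).permanent ≤ (τ * γ) ^ Fintype.card ι ∧
      ((∀ x, s (s (s x)) = x) →
        (s.bandMatrix α (γ - α) γ).permanent = (τ * γ) ^ Fintype.card ι) := by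
  induction hn : Fintype.card ι using Nat.strong_induction_on generalizing ι with
  | _ n ih =>
  subst hn
  rcases isEmpty_or_nonempty ι with hι | ⟨⟨x₀⟩⟩
  · simp [Matrix.permanent_isEmpty]
  classical
  have hγ : 0 ≤ γ := h1.trans hαγ
  let p : ι → Prop := fun y => s.SameCycle x₀ y
  have hp : ∀ x, p (s x) ↔ p x := fun x => sameCycle_apply_right
  have hnp : ∀ x, ¬ p (s x) ↔ ¬ p x := fun x => not_congr (hp x)
  have hblock : (s.bandMatrix α (γ - α) γ).permanent =
      ((s.subtypePerm hp).bandMatrix α (γ - α) γ).permanent *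
        ((s.subtypePerm (p := fun x => ¬ p x) hnp).bandMatrix α (γ - α) γ).permanent := by
    rw [Matrix.permanent_eq_mul_of_block _ p, bandMatrix_submatrix s p hp,
      bandMatrix_submatrix s (fun x => ¬ p x) hnp]
    intro x y hx hy
    have e1 : y ≠ s x := by rintro rfl; exact hy ((hp x).2 hx)
    have e2 : y ≠ x := by rintro rfl; exact hy hx
    have e3 : s y ≠ x := by rintro rfl; exact hy ((hp y).1 hx)
    simp [bandMatrix_apply, e1, e2, e3]
  have hsub (q : ι → Prop) (hq : ∀ x, q (s x) ↔ q x) (x : {x // q x}) :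
      s.subtypePerm hq x ≠ x ∧ s.subtypePerm hq (s.subtypePerm hq x) ≠ x := by
    simpa [Subtype.ext_iff] using h x
  have hcyc : ∀ x y, (s.subtypePerm hp).SameCycle x y := fun x y =>
    sameCycle_subtypePerm.2 (x.2.symm.trans y.2)
  have : Nonempty {x // p x} := ⟨⟨x₀, SameCycle.refl _ _⟩⟩
  have hper := permanent_bandMatrix_of_sameCycle hcyc (hsub p hp) α γ
  have hcard : Fintype.card {x // p x} + Fintype.card {x // ¬ p x} = Fintype.card ι := by
    rw [Fintype.card_subtype_compl, Nat.add_sub_cancel' (Fintype.card_subtype_le p)]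
  have hpos : 0 < Fintype.card {x // p x} := Fintype.card_pos
  obtain ⟨ih1, ih2⟩ := ih _ (by omega) (s.subtypePerm (p := fun x => ¬ p x) hnp) (hsub (fun x => ¬ p x) hnp) rfl
  have hmem : ({x₀, s x₀, s (s x₀)} : Finset ι) ⊆ Finset.univ.filter p := by
    intro y
    simp only [Finset.mem_insert, Finset.mem_singleton, Finset.mem_filter, Finset.mem_univ,
      true_and]
    have h0 : p x₀ := SameCycle.refl _ _
    rintro (rfl | rfl | rfl)
    · exact h0
    · exact (hp _).2 h0
    · exact (hp _).2 ((hp _).2 h0)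
  have hthree : ({x₀, s x₀, s (s x₀)} : Finset ι).card = 3 :=
    Finset.card_eq_three.2 ⟨_, _, _, (h x₀).1.symm, (h x₀).2.symm, (h (s x₀)).1.symm, rfl⟩
  have h3 : 3 ≤ Fintype.card {x // p x} := by
    rw [Fintype.card_subtype, ← hthree]
    exact Finset.card_le_card hmem
  rw [hblock, ← hcard, pow_add]
  refine ⟨mul_le_mul ?_ ih1 ?_ (by positivity), fun hcube => ?_⟩
  · rw [hper]
    exact two_mul_pow_add_le h1 hαγ hτ hτ1 h4 h3
  · exact permanent_bandMatrix_nonneg _ h1 (sub_nonneg.2 hαγ) hγ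
  · rw [ih2 fun x => by simpa [Subtype.ext_iff] using hcube x]
    have hk : Fintype.card {x // p x} = 3 := by
      rw [Fintype.card_subtype, ← hthree]
      congr 1
      refine (hmem.antisymm fun y hy => ?_).symm
      obtain ⟨i, -, -, rfl⟩ := (Finset.mem_filter.1 hy).2.exists_pow_eq'
      clear hy
      induction i with
      | zero => simp
      | succ i ih =>
        rw [pow_succ', mul_apply]
        simp only [Finset.mem_insert, Finset.mem_singleton] at ih ⊢
        rcases ih with e | e | e <;> simp [e, hcube]
    rw [hper, hk, mul_pow τ γ 3, hτ]
    ring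

theorem Equiv.Perm.exists_order_three {n : ℕ} (hn : 3 ∣ n) :
    ∃ s : Perm (Fin n), (∀ x, s x ≠ x ∧ s (s x) ≠ x) ∧ ∀ x, s (s (s x)) = x := by
  obtain ⟨m, rfl⟩ := hn
  let e : Fin 3 × Fin m ≃ Fin (3 * m) := finProdFinEquiv
  refine ⟨e.permCongr ((finRotate 3).prodCongr (Equiv.refl _)), fun x => ?_, fun x => ?_⟩
  · have h : ∀ i : Fin 3, finRotate 3 i ≠ i ∧ finRotate 3 (finRotate 3 i) ≠ i := by decide
    obtain ⟨y, rfl⟩ := e.surjective x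
    simpa only [ne_eq, permCongr_apply, symm_apply_apply, e.injective.eq_iff, prodCongr_apply,
      Prod.map, Prod.ext_iff, refl_apply, and_true] using h y.1
  · have h : ∀ i : Fin 3, finRotate 3 (finRotate 3 (finRotate 3 i)) = i := by decide
    obtain ⟨y, rfl⟩ := e.surjective x
    simpa only [permCongr_apply, symm_apply_apply, e.injective.eq_iff, prodCongr_apply,
      Prod.map, Prod.ext_iff, refl_apply, and_true] using h y.1

theorem stmt_8 (α γ : ℝ) (h1 : 0 ≤ α)
    (h2 : α ≤ ((2 : ℝ) ^ ((1 : ℝ) / 3) - 1) ^ ((1 : ℝ) / 4) * γ)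
    (n : ℕ) (hn : 3 ≤ n) (hn3 : 3 ∣ n) :
    IsGreatest {x : ℝ | ∃ A ∈ LambdaHat n α (γ - α) γ, A.permanent = x}
      (2 ^ (n / 3) * γ ^ n) := by
  set τ : ℝ := (2 : ℝ) ^ ((1 : ℝ) / 3) with hτdef
  have hτ : τ ^ 3 = 2 := by
    rw [hτdef, ← Real.rpow_natCast, ← Real.rpow_mul (by norm_num)]
    norm_num
  have hτ1 : 1 < τ := Real.one_lt_rpow (by norm_num) (by norm_num)
  have hτ2 : τ ≤ 2 := by nlinarith [sq_nonneg (τ - 1)]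
  set c : ℝ := (τ - 1) ^ ((1 : ℝ) / 4) with hcdef
  have hc4 : c ^ 4 = τ - 1 := by
    rw [hcdef, ← Real.rpow_natCast, ← Real.rpow_mul (by linarith)]
    norm_num
  have hc0 : 0 < c := Real.rpow_pos_of_pos (by linarith) _
  have hc1 : c ≤ 1 := Real.rpow_le_one (by linarith) (by linarith) (by norm_num)
  have hγ : 0 ≤ γ := nonneg_of_mul_nonneg_right (h1.trans h2) hc0
  have hαγ : α ≤ γ := h2.trans (mul_le_of_le_one_left hγ hc1)
  have h4 : α ^ 4 ≤ (τ - 1) * γ ^ 4 := by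
    rw [← hc4, ← mul_pow]
    exact pow_le_pow_left₀ h1 h2 4
  have hpow : (2 : ℝ) ^ (n / 3) * γ ^ n = (τ * γ) ^ Fintype.card (Fin n) := by
    rw [Fintype.card_fin, mul_pow, ← hτ, ← pow_mul, Nat.mul_div_cancel' hn3]
  rw [hpow]
  refine ⟨?_, ?_⟩
  · obtain ⟨s, hs, hs3⟩ := exists_order_three hn3
    exact ⟨s.bandMatrix α (γ - α) γ, ⟨s, hs, rfl⟩,
      (permanent_bandMatrix_le h1 hαγ hτ hτ1.le h4 s hs).2 hs3⟩
  · rintro x ⟨A, ⟨s, hs, rfl⟩, rfl⟩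
    exact (permanent_bandMatrix_le h1 hαγ hτ hτ1.le h4 s hs).1
end

section
/- Among the 35 circulant matrices P⁷^i + P⁷^j + P⁷^k of order 7, where 0 ≤ i < j < k ≤ 6 and P⁷ is the 7×7 permutation matrix of the cycle (1 2 … 7), exactly 21 have an odd permanent. -/
open Matrix

/-- `P₇`: the 7×7 permutation matrix of the cycle `(1 2 … 7)`. -/
def P7 : Matrix (Fin 7) (Fin 7) ℤ := (finRotate 7).permMatrix ℤ

/-- In characteristic two the permanent and the determinant coincide. -/
theorem permanent_eq_det_of_charTwo {n R : Type*} [Fintype n] [DecidableEq n] [CommRing R]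
    [CharP R 2] (A : Matrix n n R) : A.permanent = A.det := by
  rw [permanent, det_apply]
  refine Finset.sum_congr rfl fun σ _ => ?_
  rcases Int.units_eq_one_or (Equiv.Perm.sign σ) with h | h
  · simp [h]
  · simp [h, CharTwo.neg_eq]

theorem odd_permanent_iff {n : Type*} [Fintype n] [DecidableEq n] (A : Matrix n n ℤ) :
    Odd A.permanent ↔ (A.map (Int.cast : ℤ → ZMod 2)).det = 1 := by
  rw [← permanent_eq_det_of_charTwo, ← ZMod.intCast_eq_one_iff_odd]
  simp [permanent]

theorem det_eq_one_iff_of_pow_succ_eq_self {n : Type*} [Fintype n] [DecidableEq n]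
    {A : Matrix n n (ZMod 2)} {m : ℕ} (hm : m ≠ 0) (hA : A ^ (m + 1) = A) :
    A.det = 1 ↔ A ^ m = 1 := by
  constructor
  · intro h
    have hu : IsUnit A := (isUnit_iff_isUnit_det A).2 (h ▸ isUnit_one)
    exact hu.mul_right_cancel (by rw [← pow_succ, hA, one_mul])
  · intro h
    have hd : A.det ^ m = 1 := by rw [← det_pow, h, det_one]
    generalize A.det = d at hd
    fin_cases d
    · exact absurd ((zero_pow hm).symm.trans hd) zero_ne_one
    · rfl

/-- The sum `P ^ i + P ^ j + P ^ k` over `ZMod 2`, where `P` is the cyclic permutation matrix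
of order 7, with explicit entries. -/
def cyclicTrinomial (i j k : Fin 7) : Matrix (Fin 7) (Fin 7) (ZMod 2) :=
  circulant (Pi.single (-i) 1 + Pi.single (-j) 1 + Pi.single (-k) 1)

theorem P7_map_pow (i : Fin 7) :
    (P7.map (Int.cast : ℤ → ZMod 2)) ^ (i : ℕ) = circulant (Pi.single (-i) 1) := by
  have h : P7.map (Int.cast : ℤ → ZMod 2) = circulant (Pi.single (-1) 1) := by
    ext r s
    simp only [P7, Equiv.Perm.permMatrix, map_apply, PEquiv.toMatrix_apply, circulant_apply]
    revert r s
    decide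
  rw [h]
  revert i
  decide +kernel

theorem map_P7_trinomial (i j k : Fin 7) :
    (P7 ^ (i : ℕ) + P7 ^ (j : ℕ) + P7 ^ (k : ℕ)).map (Int.cast : ℤ → ZMod 2) =
      cyclicTrinomial i j k := by
  have h (i : ℕ) : (P7 ^ i).map (Int.cast : ℤ → ZMod 2) = P7.map Int.cast ^ i :=
    map_pow (Int.castRingHom (ZMod 2)).mapMatrix P7 i
  rw [Matrix.map_add _ Int.cast_add, Matrix.map_add _ Int.cast_add, h, h, h, P7_map_pow,
    P7_map_pow, P7_map_pow, cyclicTrinomial, ← circulant_add, ← circulant_add]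

theorem circulant_single_pow_eight (i : Fin 7) :
    circulant (Pi.single i (1 : ZMod 2)) ^ 8 = circulant (Pi.single i 1) := by
  revert i
  decide +kernel

theorem cyclicTrinomial_pow_eight (i j k : Fin 7) :
    cyclicTrinomial i j k ^ 8 = cyclicTrinomial i j k := by
  have h {A B : Matrix (Fin 7) (Fin 7) (ZMod 2)} (hc : Commute A B) :
      (A + B) ^ 8 = A ^ 8 + B ^ 8 := add_pow_char_pow_of_commute 2 3 hc
  simp only [cyclicTrinomial, circulant_add]
  rw [h, h, circulant_single_pow_eight, circulant_single_pow_eight, circulant_single_pow_eight]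
  · exact circulant_mul_comm _ _
  · rw [← circulant_add]
    exact circulant_mul_comm _ _

theorem stmt_19 :
    ((Finset.univ : Finset (Fin 7 × Fin 7 × Fin 7)).filter
        (fun t => t.1 < t.2.1 ∧ t.2.1 < t.2.2 ∧
          Odd ((P7 ^ (t.1 : ℕ) + P7 ^ (t.2.1 : ℕ) + P7 ^ (t.2.2 : ℕ)).permanent))).card
      = 21 := by
  simp only [odd_permanent_iff, map_P7_trinomial,
    det_eq_one_iff_of_pow_succ_eq_self (by decide : 7 ≠ 0) (cyclicTrinomial_pow_eight _ _ _)]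
  decide +kernel
end
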